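/- Let g̃ be a finite-dimensional semisimple Lie algebra over ℂ, h̃ ⊆ g̃ a Cartan subalgebra, and g ⊆ g̃ a semisimple Lie subalgebra that is an h̃-submodule of g̃ under the adjoint action (i.e., [h̃, g] ⊆ g; a regular subalgebra). Then g ∩ h̃ is a Cartan subalgebra of g. -/

import Mathlib

/-!
Write `L`, `H`, `G` for the ambient algebra, its Cartan subalgebra and the regular subalgebra. For
`h ∈ H` the map `ad h` restricts to a derivation of the semisimple algebra `G`, hence is inner: there
is `g ∈ G` with `[g, y] = [h, y]` for all `y ∈ G`. Since `H` is abelian, for `h' ∈ H` the element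
`[h', g] ∈ G` acts on `G` as `[ad h', ad h] = 0`, so it lies in the centre of `G` and vanishes. Thus
`g` centralizes `H`, and `g ∈ H` because `H` is self-normalizing
(`exists_mem_inf_lie_eq_of_regular`).

So `H` and `G ∩ H` induce the same operators on `G`. An `x ∈ G` normalizing `G ∩ H` therefore
normalizes `H`, and so lies in `H`. Nilpotency of `G ∩ H` is clear, as it is abelian.
-/

/-- The derivation of `G` obtained by restricting `ad h`, for `h` normalizing `G`. -/
def adRestrictDerivation {L : Type*} [LieRing L] [LieAlgebra ℂ L]
    (G : LieSubalgebra ℂ L) (h : L) (hG : ∀ y ∈ G, ⁅h, y⁆ ∈ G) : LieDerivation ℂ G G where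
  toFun y := ⟨⁅h, (y : L)⁆, hG y y.2⟩
  map_add' a b := by ext; simp
  map_smul' c a := by ext; simp
  leibniz' a b := by
    ext
    change ⁅h, ⁅(a : L), (b : L)⁆⁆ = ⁅(a : L), ⁅h, (b : L)⁆⁆ - ⁅(b : L), ⁅h, (a : L)⁆⁆
    rw [leibniz_lie, ← lie_skew (b : L) ⁅h, (a : L)⁆]
    abel

/-- The action of each `h ∈ H` on `G` is realized by an element of `G ∩ H`. -/
theorem exists_mem_inf_lie_eq_of_regular
    {L : Type*} [LieRing L] [LieAlgebra ℂ L] [FiniteDimensional ℂ L]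
    (H : LieSubalgebra ℂ L) [H.IsCartanSubalgebra]
    (G : LieSubalgebra ℂ L) [LieAlgebra.IsSemisimple ℂ G]
    (hreg : ∀ x ∈ H, ∀ y ∈ G, ⁅x, y⁆ ∈ G)
    (habel : ∀ x ∈ H, ∀ y ∈ H, ⁅x, y⁆ = 0) (h : L) (hh : h ∈ H) :
    ∃ g ∈ G, g ∈ H ∧ ∀ y ∈ G, ⁅g, y⁆ = ⁅h, y⁆ := by
  obtain ⟨g, hg⟩ := LieDerivation.IsKilling.exists_eq_ad (adRestrictDerivation G h (hreg h hh))
  have hgy : ∀ y ∈ G, ⁅(g : L), y⁆ = ⁅h, y⁆ := by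
    intro y hy
    have h1 := LieDerivation.congr_fun hg ⟨y, hy⟩
    rw [LieDerivation.ad_apply_apply] at h1
    exact congrArg Subtype.val h1
  refine ⟨g, g.2, ?_, hgy⟩
  rw [← LieSubalgebra.IsCartanSubalgebra.self_normalizing (H := H),
    LieSubalgebra.mem_normalizer_iff']
  intro h' hh'
  have hz : (⟨⁅h', (g : L)⁆, hreg h' hh' g g.2⟩ : G) = 0 := by
    rw [← LieDerivation.IsKilling.ad_apply_eq_zero_iff ℂ G]
    ext y
    rw [LieDerivation.ad_apply_apply]
    change ⁅⁅h', (g : L)⁆, (y : L)⁆ = 0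
    rw [lie_lie, hgy y y.2, hgy _ (hreg h' hh' y y.2), ← lie_lie, habel h' hh' h hh, zero_lie]
  have hz' : ⁅h', (g : L)⁆ = 0 := congrArg Subtype.val hz
  rw [hz']
  exact H.zero_mem


/-- Section 3.1: if `g̃` is a finite-dimensional complex semisimple Lie algebra, `h̃ ⊆ g̃` a
Cartan subalgebra, and `g ⊆ g̃` a semisimple Lie subalgebra stable under the adjoint action of
`h̃` (a regular subalgebra), then `g ∩ h̃` is a Cartan subalgebra of `g`. -/
theorem inf_cartan_isCartanSubalgebra_of_regular
    {L : Type*} [LieRing L] [LieAlgebra ℂ L] [FiniteDimensional ℂ L]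
    [LieAlgebra.IsSemisimple ℂ L]
    (H : LieSubalgebra ℂ L) [H.IsCartanSubalgebra]
    (G : LieSubalgebra ℂ L) [LieAlgebra.IsSemisimple ℂ G]
    (hreg : ∀ x ∈ H, ∀ y ∈ G, ⁅x, y⁆ ∈ G) :
    (H.comap G.incl).IsCartanSubalgebra := by
  have habel : ∀ x ∈ H, ∀ y ∈ H, ⁅x, y⁆ = 0 := fun x hx y hy =>
    congrArg Subtype.val (trivial_lie_zero H H ⟨x, hx⟩ ⟨y, hy⟩)
  refine ⟨?_, le_antisymm (fun x hx => ?_) (LieSubalgebra.le_normalizer _)⟩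
  · have : IsLieAbelian (H.comap G.incl) :=
      ⟨fun x y => Subtype.ext (Subtype.ext (habel x x.2 y y.2))⟩
    infer_instance
  · rw [LieSubalgebra.mem_normalizer_iff'] at hx
    change (x : L) ∈ H
    rw [← LieSubalgebra.IsCartanSubalgebra.self_normalizing (H := H),
      LieSubalgebra.mem_normalizer_iff']
    intro h hh
    obtain ⟨g, hgG, hgH, hg⟩ := exists_mem_inf_lie_eq_of_regular H G hreg habel h hh
    rw [← hg x x.2]
    exact hx ⟨g, hgG⟩ hgH
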